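/- (Lemma 1.) For every pair ε₁ > ε₂ > 0 there exists n = n(ε₁, ε₂) > 0 (depending only on ε₁, ε₂ and the fixed system data) such that for every solution of the scalar-input high-order-tuner system on [t₁,∞) with ‖z(t₁)‖ ≤ ε₁, the set S = {t ∈ [t₁,∞) : ‖x₁(t)‖ > ε₂} has Lebesgue measure at most n. -/

import Mathlib

open Matrix MeasureTheory Filter intervalIntegral

/-!
Write `w = θ - ϑ`. Along solutions, `V = eᵀPe + (Λ/γ) (|w|² + |ϑ|²)` has derivative
`-eᵀQe + 4Λ (eᵀPB)(wᵀΦ) - 2(Λ/γ) β (1 + μ|Φ|²) |w|²`: the terms in `ϑᵀΦ` cancel because of the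
weight `Λ/γ`. Expanding `|e - 2 (wᵀΦ) PB|² ≥ 0` bounds the cross term by
`Λ|e|² + 4Λ |PB|² |w|² |Φ|²`, whose two parts are absorbed by `Q ≥ 2I` and by the gain `μ`. Hence
`V' ≤ -r (|e|² + |w|²)` with `r = min (2 - Λ) (2(Λ/γ)β)`, so `∫ r (|e|² + |w|²) ≤ V(t₁)`, and
Markov's inequality bounds the time during which `|e|² + |w|² > ε₂²`.
-/

section Dissipation

variable {V V' g : ℝ → ℝ} {a : ℝ}

theorem intervalIntegral_le_of_hasDerivWithinAt_le_neg {b : ℝ} (hab : a ≤ b)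
    (hV : ∀ t ∈ Set.Icc a b, HasDerivWithinAt V (V' t) (Set.Ici a) t)
    (hV' : ∀ t ∈ Set.Icc a b, V' t ≤ -g t) (hg : IntegrableOn g (Set.Icc a b)) :
    ∫ t in a..b, g t ≤ V a - V b := by
  have hdrop : V b - V a ≤ ∫ t in a..b, -g t :=
    sub_le_integral_of_hasDeriv_right_of_le hab
      (fun t ht => (hV t ht).continuousWithinAt.mono Set.Icc_subset_Ici_self)
      (fun t ht => (hV t (Set.Ioo_subset_Icc_self ht)).mono (Set.Ioi_subset_Ici ht.1.le))
      hg.neg (fun t ht => hV' t (Set.Ioo_subset_Icc_self ht))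
  rw [intervalIntegral.integral_neg] at hdrop
  linarith

theorem integrableOn_Ioi_and_integral_le_of_hasDerivWithinAt_le_neg
    (hV : ∀ t ∈ Set.Ici a, HasDerivWithinAt V (V' t) (Set.Ici a) t)
    (hV' : ∀ t ∈ Set.Ici a, V' t ≤ -g t) (hV0 : ∀ t ∈ Set.Ici a, 0 ≤ V t)
    (hg : LocallyIntegrableOn g (Set.Ici a)) (hg0 : ∀ t ∈ Set.Ici a, 0 ≤ g t) :
    IntegrableOn g (Set.Ioi a) ∧ ∫ t in Set.Ioi a, g t ≤ V a := by
  have hgi (b : ℝ) : IntegrableOn g (Set.Icc a b) :=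
    hg.integrableOn_compact_subset Set.Icc_subset_Ici_self isCompact_Icc
  have hbound : ∀ b ≥ a, ∫ t in a..b, g t ≤ V a := fun b hb =>
    (intervalIntegral_le_of_hasDerivWithinAt_le_neg hb (fun t ht => hV t ht.1)
      (fun t ht => hV' t ht.1) (hgi b)).trans (sub_le_self _ (hV0 b hb))
  have hint : IntegrableOn g (Set.Ioi a) := by
    refine integrableOn_Ioi_of_intervalIntegral_norm_bounded (V a) a
      (fun b => (hgi b).mono_set Set.Ioc_subset_Icc_self) tendsto_id ?_
    filter_upwards [eventually_ge_atTop a] with b hb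
    refine (intervalIntegral.integral_congr fun t ht => ?_).trans_le (hbound b hb)
    exact Real.norm_of_nonneg (hg0 t (Set.uIcc_of_le hb ▸ ht).1)
  exact ⟨hint, le_of_tendsto (intervalIntegral_tendsto_integral_Ioi a hint tendsto_id)
    ((eventually_ge_atTop a).mono hbound)⟩

theorem volume_setOf_le_and_lt_le_of_hasDerivWithinAt_le_neg {ε : ℝ} (hε : 0 < ε)
    (hV : ∀ t ∈ Set.Ici a, HasDerivWithinAt V (V' t) (Set.Ici a) t)
    (hV' : ∀ t ∈ Set.Ici a, V' t ≤ -g t) (hV0 : ∀ t ∈ Set.Ici a, 0 ≤ V t)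
    (hg : LocallyIntegrableOn g (Set.Ici a)) (hg0 : ∀ t ∈ Set.Ici a, 0 ≤ g t) :
    volume {t | a ≤ t ∧ ε < g t} ≤ ENNReal.ofReal (V a / ε) := by
  obtain ⟨hint, hle⟩ :=
    integrableOn_Ioi_and_integral_le_of_hasDerivWithinAt_le_neg hV hV' hV0 hg hg0
  rw [← integrableOn_Ici_iff_integrableOn_Ioi] at hint
  rw [← integral_Ici_eq_integral_Ioi] at hle
  have hg0' : 0 ≤ᵐ[volume.restrict (Set.Ici a)] g :=
    ae_restrict_of_forall_mem measurableSet_Ici hg0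
  calc volume {t | a ≤ t ∧ ε < g t}
      ≤ volume.restrict (Set.Ici a) {t | ENNReal.ofReal ε ≤ ENNReal.ofReal (g t)} := by
        rw [Measure.restrict_apply' measurableSet_Ici]
        exact measure_mono fun t ht => ⟨ENNReal.ofReal_le_ofReal ht.2.le, ht.1⟩
    _ ≤ (∫⁻ t in Set.Ici a, ENNReal.ofReal (g t)) / ENNReal.ofReal ε :=
        meas_ge_le_lintegral_div hint.aemeasurable.ennreal_ofReal (by simpa using hε)
          ENNReal.ofReal_ne_top
    _ = ENNReal.ofReal ((∫ t in Set.Ici a, g t) / ε) := by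
        rw [← ofReal_integral_eq_lintegral_ofReal hint hg0', ENNReal.ofReal_div_of_pos hε]
    _ ≤ ENNReal.ofReal (V a / ε) := by gcongr

end Dissipation

section DotProduct

variable {m : Type*} [Fintype m]

theorem hasDerivWithinAt_dotProduct {𝕜 : Type*} [NontriviallyNormedField 𝕜] {f g : 𝕜 → m → 𝕜}
    {f' g' : m → 𝕜} {s : Set 𝕜} {t : 𝕜} (hf : HasDerivWithinAt f f' s t)
    (hg : HasDerivWithinAt g g' s t) :
    HasDerivWithinAt (fun τ => f τ ⬝ᵥ g τ) (f' ⬝ᵥ g t + f t ⬝ᵥ g') s t := by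
  rw [hasDerivWithinAt_pi] at hf hg
  simp only [dotProduct, ← Finset.sum_add_distrib]
  exact HasDerivWithinAt.fun_sum fun i _ => (hf i).fun_mul (hg i)

theorem hasDerivWithinAt_mulVec {𝕜 k : Type*} [NontriviallyNormedField 𝕜]
    (M : Matrix k m 𝕜) {f : 𝕜 → m → 𝕜} {f' : m → 𝕜} {s : Set 𝕜} {t : 𝕜}
    (hf : HasDerivWithinAt f f' s t) :
    HasDerivWithinAt (fun τ => M *ᵥ f τ) (M *ᵥ f') s t := by
  refine hasDerivWithinAt_pi.2 fun i => ?_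
  simpa [mulVec] using hasDerivWithinAt_dotProduct (hasDerivWithinAt_const t s (M i)) hf

theorem dotProduct_self_nonneg_real (x : m → ℝ) : 0 ≤ x ⬝ᵥ x := by
  simpa using dotProduct_self_star_nonneg x

theorem sq_dotProduct_le (x y : m → ℝ) : (x ⬝ᵥ y) ^ 2 ≤ (x ⬝ᵥ x) * (y ⬝ᵥ y) := by
  simpa [dotProduct, sq] using Finset.sum_mul_sq_le_sq_mul_sq Finset.univ x y

theorem four_mul_dotProduct_mul_dotProduct_le {k : Type*} [Fintype k] (x y : m → ℝ)
    (w z : k → ℝ) :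
    4 * ((x ⬝ᵥ y) * (w ⬝ᵥ z)) ≤ x ⬝ᵥ x + 4 * ((y ⬝ᵥ y) * ((w ⬝ᵥ w) * (z ⬝ᵥ z))) := by
  have hsq : 0 ≤ x ⬝ᵥ x - 4 * ((x ⬝ᵥ y) * (w ⬝ᵥ z)) + 4 * ((y ⬝ᵥ y) * (w ⬝ᵥ z) ^ 2) := by
    convert dotProduct_self_nonneg_real (x - (2 * (w ⬝ᵥ z)) • y) using 1
    simp only [sub_dotProduct, dotProduct_sub, smul_dotProduct, dotProduct_smul, smul_eq_mul,
      dotProduct_comm y x]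
    ring
  have hCS := mul_le_mul_of_nonneg_left (sq_dotProduct_le w z) (dotProduct_self_nonneg_real y)
  linarith

open scoped Matrix.Norms.L2Operator in
theorem dotProduct_mulVec_self_le [DecidableEq m] (M : Matrix m m ℝ) (x : m → ℝ) :
    x ⬝ᵥ M *ᵥ x ≤ ‖M‖ * (x ⬝ᵥ x) := by
  have hx : x ⬝ᵥ x = ‖WithLp.toLp 2 x‖ * ‖WithLp.toLp 2 x‖ := by
    rw [← real_inner_self_eq_norm_mul_norm, EuclideanSpace.inner_toLp_toLp, star_trivial]
  calc x ⬝ᵥ M *ᵥ x = inner ℝ (WithLp.toLp 2 (M *ᵥ x)) (WithLp.toLp 2 x) := by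
        rw [EuclideanSpace.inner_toLp_toLp, star_trivial]
    _ ≤ ‖WithLp.toLp 2 (M *ᵥ x)‖ * ‖WithLp.toLp 2 x‖ := real_inner_le_norm _ _
    _ ≤ ‖M‖ * ‖WithLp.toLp 2 x‖ * ‖WithLp.toLp 2 x‖ := by
        gcongr
        exact l2_opNorm_mulVec M (WithLp.toLp 2 x)
    _ = ‖M‖ * (x ⬝ᵥ x) := by rw [hx, mul_assoc]

theorem dotProduct_mulVec_add_of_lyapunov {R : Type*} [CommRing R] {A P Q : Matrix m m R}
    (h : Aᵀ * P + P * A = -Q) (x : m → R) :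
    A *ᵥ x ⬝ᵥ P *ᵥ x + x ⬝ᵥ P *ᵥ (A *ᵥ x) = -(x ⬝ᵥ Q *ᵥ x) := by
  have htranspose : A *ᵥ x ⬝ᵥ P *ᵥ x = x ⬝ᵥ (Aᵀ * P) *ᵥ x := by
    rw [← mulVec_mulVec, dotProduct_mulVec x, vecMul_transpose]
  rw [htranspose, mulVec_mulVec, ← dotProduct_add, ← add_mulVec, h, neg_mulVec, dotProduct_neg]

theorem dotProduct_mulVec_comm_of_isSymm {R : Type*} [CommSemiring R] {P : Matrix m m R}
    (hP : P.IsSymm) (x y : m → R) : x ⬝ᵥ P *ᵥ y = y ⬝ᵥ P *ᵥ x := by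
  rw [dotProduct_mulVec, ← mulVec_transpose, hP.eq, dotProduct_comm]

theorem mul_dotProduct_self_le_of_posSemidef_sub [DecidableEq m] {Q : Matrix m m ℝ} {c : ℝ}
    (hQ : (Q - c • 1).PosSemidef) (x : m → ℝ) : c * (x ⬝ᵥ x) ≤ x ⬝ᵥ Q *ᵥ x := by
  have h := hQ.dotProduct_mulVec_nonneg x
  simpa [sub_mulVec, smul_mulVec, dotProduct_sub] using h

end DotProduct

section HighOrderTuner

variable {ι κ : Type*} [Fintype ι] [Fintype κ]

/-- The Lyapunov function `eᵀPe + c (|w|² + |v|²)` of the high-order tuner, where `w` stands for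
`θ - ϑ` and `v` for `ϑ`. -/
def hotLyapunov (P : Matrix ι ι ℝ) (c : ℝ) (e : ι → ℝ) (w v : κ → ℝ) : ℝ :=
  e ⬝ᵥ P *ᵥ e + c * (w ⬝ᵥ w + v ⬝ᵥ v)

theorem hotLyapunov_nonneg {P : Matrix ι ι ℝ} (hP : P.PosSemidef) {c : ℝ} (hc : 0 ≤ c)
    (e : ι → ℝ) (w v : κ → ℝ) : 0 ≤ hotLyapunov P c e w v := by
  have he : 0 ≤ e ⬝ᵥ P *ᵥ e := by simpa using hP.dotProduct_mulVec_nonneg e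
  have hw := dotProduct_self_nonneg_real w
  have hv := dotProduct_self_nonneg_real v
  unfold hotLyapunov
  positivity

open scoped Matrix.Norms.L2Operator in
theorem hotLyapunov_le [DecidableEq ι] (P : Matrix ι ι ℝ) {c : ℝ} (hc : 0 ≤ c)
    (e : ι → ℝ) (w v : κ → ℝ) :
    hotLyapunov P c e w v ≤ (‖P‖ + c) * (e ⬝ᵥ e + w ⬝ᵥ w + v ⬝ᵥ v) := by
  have hPe := dotProduct_mulVec_self_le P e
  have he := mul_nonneg hc (dotProduct_self_nonneg_real e)
  have hw := mul_nonneg (norm_nonneg P) (dotProduct_self_nonneg_real w)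
  have hv := mul_nonneg (norm_nonneg P) (dotProduct_self_nonneg_real v)
  unfold hotLyapunov
  linarith

/-- The rate `r` in the dissipation inequality `V' ≤ -r (|e|² + |w|²)` for `V = hotLyapunov`. -/
noncomputable def hotDecayRate (Λ γ β : ℝ) : ℝ :=
  min (2 - Λ) (2 * (Λ / γ) * β)

theorem hotDecayRate_pos {Λ γ β : ℝ} (hΛ0 : 0 < Λ) (hΛ2 : Λ < 2) (hγ : 0 < γ) (hβ : 0 < β) :
    0 < hotDecayRate Λ γ β :=
  lt_min (sub_pos.2 hΛ2) (by positivity)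

variable {A P Q : Matrix ι ι ℝ} {B : ι → ℝ} {Λ γ β μ : ℝ}

theorem hasDerivWithinAt_hotLyapunov (hP : P.IsSymm) (hLyap : Aᵀ * P + P * A = -Q) (hγ : γ ≠ 0)
    {Φ : κ → ℝ} {e : ℝ → ι → ℝ} {θ ϑ : ℝ → κ → ℝ} {s : Set ℝ} {t : ℝ}
    (he : HasDerivWithinAt e (A *ᵥ e t + (θ t ⬝ᵥ Φ) • (Λ • B)) s t)
    (hϑ : HasDerivWithinAt ϑ ((-γ * (e t ⬝ᵥ P *ᵥ B)) • Φ) s t)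
    (hθ : HasDerivWithinAt θ ((-β * (1 + μ * (Φ ⬝ᵥ Φ))) • (θ t - ϑ t)) s t) :
    HasDerivWithinAt (fun τ => hotLyapunov P (Λ / γ) (e τ) (θ τ - ϑ τ) (ϑ τ))
      (-(e t ⬝ᵥ Q *ᵥ e t) + 4 * Λ * ((e t ⬝ᵥ P *ᵥ B) * ((θ t - ϑ t) ⬝ᵥ Φ))
        - 2 * (Λ / γ) * β * (1 + μ * (Φ ⬝ᵥ Φ)) * ((θ t - ϑ t) ⬝ᵥ (θ t - ϑ t))) s t := by
  have hw := hθ.fun_sub hϑ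
  have hV := (hasDerivWithinAt_dotProduct he (hasDerivWithinAt_mulVec P he)).fun_add
    (((hasDerivWithinAt_dotProduct hw hw).fun_add
      (hasDerivWithinAt_dotProduct hϑ hϑ)).const_mul (Λ / γ))
  refine hV.congr_deriv ?_
  have hA := dotProduct_mulVec_add_of_lyapunov hLyap (e t)
  have hB := dotProduct_mulVec_comm_of_isSymm hP B (e t)
  have hθΦ : θ t ⬝ᵥ Φ = (θ t - ϑ t) ⬝ᵥ Φ + ϑ t ⬝ᵥ Φ := by rw [← add_dotProduct, sub_add_cancel]
  rw [hθΦ]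
  generalize θ t - ϑ t = w
  simp only [add_dotProduct, mulVec_add, mulVec_smul, dotProduct_add, smul_dotProduct,
    dotProduct_smul, smul_eq_mul, sub_dotProduct, dotProduct_sub, hB, dotProduct_comm Φ w,
    dotProduct_comm Φ (ϑ t)]
  field_simp
  linear_combination γ * hA

theorem hotLyapunov_rate_le [DecidableEq ι] (hQ : (Q - (2 : ℝ) • 1).PosSemidef) (hΛ : 0 ≤ Λ)
    (hγ : 0 < γ) (hβ : 0 < β) (hμ : 2 * γ * (P *ᵥ B ⬝ᵥ P *ᵥ B) / β ≤ μ)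
    (Φ w : κ → ℝ) (e : ι → ℝ) :
    -(e ⬝ᵥ Q *ᵥ e) + 4 * Λ * ((e ⬝ᵥ P *ᵥ B) * (w ⬝ᵥ Φ))
        - 2 * (Λ / γ) * β * (1 + μ * (Φ ⬝ᵥ Φ)) * (w ⬝ᵥ w)
      ≤ -(hotDecayRate Λ γ β * (e ⬝ᵥ e + w ⬝ᵥ w)) := by
  have he := dotProduct_self_nonneg_real e
  have hw := dotProduct_self_nonneg_real w
  have hΦ := dotProduct_self_nonneg_real Φ
  have hQe : 2 * (e ⬝ᵥ e) ≤ e ⬝ᵥ Q *ᵥ e := mul_dotProduct_self_le_of_posSemidef_sub hQ e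
  have hcross := mul_le_mul_of_nonneg_left
    (four_mul_dotProduct_mul_dotProduct_le e (P *ᵥ B) w Φ) hΛ
  have hgain : 4 * Λ * ((P *ᵥ B ⬝ᵥ P *ᵥ B) * ((w ⬝ᵥ w) * (Φ ⬝ᵥ Φ)))
      ≤ 2 * (Λ / γ) * β * (μ * (Φ ⬝ᵥ Φ)) * (w ⬝ᵥ w) := by
    have hμ' : 2 * (P *ᵥ B ⬝ᵥ P *ᵥ B) ≤ β * μ / γ := by
      rw [le_div_iff₀ hγ]
      linarith [(div_le_iff₀ hβ).1 hμ]
    calc _ = 2 * (P *ᵥ B ⬝ᵥ P *ᵥ B) * (2 * Λ * ((w ⬝ᵥ w) * (Φ ⬝ᵥ Φ))) := by ring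
      _ ≤ β * μ / γ * (2 * Λ * ((w ⬝ᵥ w) * (Φ ⬝ᵥ Φ))) := by gcongr
      _ = _ := by ring
  have hmin_e := mul_le_mul_of_nonneg_right (min_le_left (2 - Λ) (2 * (Λ / γ) * β)) he
  have hmin_w := mul_le_mul_of_nonneg_right (min_le_right (2 - Λ) (2 * (Λ / γ) * β)) hw
  unfold hotDecayRate
  linarith

theorem volume_setOf_lt_sqrt_le_hotLyapunov_div [DecidableEq ι] (hΛ0 : 0 < Λ) (hΛ2 : Λ < 2)
    (hP : P.PosSemidef) (hLyap : Aᵀ * P + P * A = -Q) (hQ : (Q - (2 : ℝ) • 1).PosSemidef)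
    (hγ : 0 < γ) (hβ : 0 < β) (hμ : 2 * γ * (P *ᵥ B ⬝ᵥ P *ᵥ B) / β ≤ μ)
    {Φ : ℝ → κ → ℝ} {ε t₁ : ℝ} (hε : 0 < ε) {e : ℝ → ι → ℝ} {θ ϑ : ℝ → κ → ℝ}
    (he : ∀ t ∈ Set.Ici t₁,
      HasDerivWithinAt e (A *ᵥ e t + (θ t ⬝ᵥ Φ t) • (Λ • B)) (Set.Ici t₁) t)
    (hϑ : ∀ t ∈ Set.Ici t₁,
      HasDerivWithinAt ϑ ((-γ * (e t ⬝ᵥ P *ᵥ B)) • Φ t) (Set.Ici t₁) t)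
    (hθ : ∀ t ∈ Set.Ici t₁,
      HasDerivWithinAt θ ((-β * (1 + μ * (Φ t ⬝ᵥ Φ t))) • (θ t - ϑ t)) (Set.Ici t₁) t) :
    volume {t | t₁ ≤ t ∧ ε < √(e t ⬝ᵥ e t + (θ t - ϑ t) ⬝ᵥ (θ t - ϑ t))} ≤
      ENNReal.ofReal (hotLyapunov P (Λ / γ) (e t₁) (θ t₁ - ϑ t₁) (ϑ t₁) /
        (hotDecayRate Λ γ β * ε ^ 2)) := by
  have hr : 0 < hotDecayRate Λ γ β := hotDecayRate_pos hΛ0 hΛ2 hγ hβ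
  have hcont : ContinuousOn (fun t => e t ⬝ᵥ e t + (θ t - ϑ t) ⬝ᵥ (θ t - ϑ t)) (Set.Ici t₁) :=
    fun t ht =>
      have hw := (hθ t ht).fun_sub (hϑ t ht)
      ((hasDerivWithinAt_dotProduct (he t ht) (he t ht)).fun_add
        (hasDerivWithinAt_dotProduct hw hw)).continuousWithinAt
  have hvol := volume_setOf_le_and_lt_le_of_hasDerivWithinAt_le_neg (mul_pos hr (pow_pos hε 2))
    (fun t ht => hasDerivWithinAt_hotLyapunov (isHermitian_iff_isSymm.1 hP.isHermitian) hLyap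
      hγ.ne' (he t ht) (hϑ t ht) (hθ t ht))
    (fun t _ => hotLyapunov_rate_le hQ hΛ0.le hγ hβ hμ _ _ _)
    (fun t _ => hotLyapunov_nonneg hP (div_nonneg hΛ0.le hγ.le) _ _ _)
    ((hcont.const_mul _).locallyIntegrableOn measurableSet_Ici)
    (fun t _ => mul_nonneg hr.le
      (add_nonneg (dotProduct_self_nonneg_real _) (dotProduct_self_nonneg_real _)))
  simpa only [Real.lt_sqrt hε.le, mul_lt_mul_iff_right₀ hr] using hvol

end HighOrderTuner

open scoped Matrix.Norms.L2Operator in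
theorem scalar_hot_lemma1_general {ι κ : Type*} [Fintype ι] [DecidableEq ι] [Fintype κ]
    {A P Q : Matrix ι ι ℝ} {B : ι → ℝ} {Λ γ β μ : ℝ} (hΛ0 : 0 < Λ) (hΛ2 : Λ < 2)
    (hP : P.PosSemidef) (hLyap : Aᵀ * P + P * A = -Q) (hQ : (Q - (2 : ℝ) • 1).PosSemidef)
    (hγ : 0 < γ) (hβ : 0 < β) (hμ : 2 * γ * (P *ᵥ B ⬝ᵥ P *ᵥ B) / β ≤ μ) (Φ : ℝ → κ → ℝ)
    {ε₁ ε₂ : ℝ} (hε₁ : 0 < ε₁) (hε₂ : 0 < ε₂) :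
    ∃ nb > (0 : ℝ), ∀ (t₁ : ℝ) (e : ℝ → ι → ℝ) (θ ϑ : ℝ → κ → ℝ),
      (∀ t ∈ Set.Ici t₁,
        HasDerivWithinAt e (A *ᵥ e t + (θ t ⬝ᵥ Φ t) • (Λ • B)) (Set.Ici t₁) t) →
      (∀ t ∈ Set.Ici t₁,
        HasDerivWithinAt ϑ ((-γ * (e t ⬝ᵥ P *ᵥ B)) • Φ t) (Set.Ici t₁) t) →
      (∀ t ∈ Set.Ici t₁,
        HasDerivWithinAt θ ((-β * (1 + μ * (Φ t ⬝ᵥ Φ t))) • (θ t - ϑ t)) (Set.Ici t₁) t) →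
      √(e t₁ ⬝ᵥ e t₁ + (θ t₁ - ϑ t₁) ⬝ᵥ (θ t₁ - ϑ t₁) + ϑ t₁ ⬝ᵥ ϑ t₁) ≤ ε₁ →
      volume {t : ℝ | t₁ ≤ t ∧ ε₂ < √(e t ⬝ᵥ e t + (θ t - ϑ t) ⬝ᵥ (θ t - ϑ t))}
        ≤ ENNReal.ofReal nb := by
  have hr : 0 < hotDecayRate Λ γ β := hotDecayRate_pos hΛ0 hΛ2 hγ hβ
  have hc : 0 < Λ / γ := div_pos hΛ0 hγ
  refine ⟨(‖P‖ + Λ / γ) * ε₁ ^ 2 / (hotDecayRate Λ γ β * ε₂ ^ 2), by positivity,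
    fun t₁ e θ ϑ he hϑ hθ hz => ?_⟩
  have hV₁ : hotLyapunov P (Λ / γ) (e t₁) (θ t₁ - ϑ t₁) (ϑ t₁) ≤ (‖P‖ + Λ / γ) * ε₁ ^ 2 :=
    (hotLyapunov_le P hc.le _ _ _).trans (by gcongr; exact (Real.sqrt_le_left hε₁.le).1 hz)
  exact (volume_setOf_lt_sqrt_le_hotLyapunov_div hΛ0 hΛ2 hP hLyap hQ hγ hβ hμ hε₂ he hϑ hθ).trans
    (ENNReal.ofReal_le_ofReal (by gcongr))

/-- Lemma 1. For every `ε₁ > ε₂ > 0` there exists `n(ε₁,ε₂) > 0`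
such that for every solution with `‖z(t₁)‖ ≤ ε₁`, the set
`S = {t ≥ t₁ : ‖x₁(t)‖ > ε₂}` has Lebesgue measure at most `n(ε₁,ε₂)`. -/
theorem scalar_hot_lemma1
    (n N : ℕ)
    (AH : Matrix (Fin n) (Fin n) ℝ) (B : Fin n → ℝ)
    (Λ : ℝ) (hΛ0 : 0 < Λ) (hΛ1 : Λ ≤ 1)
    (Q P : Matrix (Fin n) (Fin n) ℝ)
    (hQ : Q.PosDef) (hP : P.PosDef)
    (hLyap : AHᵀ * P + P * AH = -Q)
    (hQ2 : (Q - (2 : ℝ) • 1).PosSemidef)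
    (γ β μ : ℝ) (hγ : 0 < γ) (hβ : 0 < β)
    (hμ : 2 * γ * (P.mulVec B ⬝ᵥ P.mulVec B) / β ≤ μ)
    (t₀ : ℝ)
    (Φ : ℝ → Fin N → ℝ)
    (hΦcont : ContinuousOn Φ (Set.Ici t₀))
    (hΦbdd : ∃ C, ∀ t ∈ Set.Ici t₀, Real.sqrt (∑ j, Φ t j ^ 2) ≤ C)
    : ∀ ε₁ ε₂ : ℝ, 0 < ε₂ → ε₂ < ε₁ →
      ∃ nb > (0 : ℝ), ∀ t₁, t₀ ≤ t₁ → ∀ e : ℝ → Fin n → ℝ, ∀ θ ϑ : ℝ → Fin N → ℝ,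
      (∀ t ∈ Set.Ici t₁, HasDerivAt e (AH.mulVec (e t) + (θ t ⬝ᵥ Φ t) • (Λ • B)) t) →
      (∀ t ∈ Set.Ici t₁, HasDerivAt ϑ ((-γ * (e t ⬝ᵥ P.mulVec B)) • Φ t) t) →
      (∀ t ∈ Set.Ici t₁, HasDerivAt θ ((-β * (1 + μ * (Φ t ⬝ᵥ Φ t))) • (θ t - ϑ t)) t) →
      Real.sqrt (e t₁ ⬝ᵥ e t₁ + (θ t₁ - ϑ t₁) ⬝ᵥ (θ t₁ - ϑ t₁) + ϑ t₁ ⬝ᵥ ϑ t₁) ≤ ε₁ →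
      volume {t : ℝ | t₁ ≤ t ∧
        ε₂ < Real.sqrt (e t ⬝ᵥ e t + (θ t - ϑ t) ⬝ᵥ (θ t - ϑ t))} ≤ ENNReal.ofReal nb := by
  intro ε₁ ε₂ hε₂ hε
  obtain ⟨nb, hnb, hvol⟩ := scalar_hot_lemma1_general hΛ0 (by linarith) hP.posSemidef hLyap hQ2
    hγ hβ hμ Φ (hε₂.trans hε) hε₂
  exact ⟨nb, hnb, fun t₁ _ e θ ϑ he hϑ hθ => hvol t₁ e θ ϑ (fun t ht => (he t ht).hasDerivWithinAt)
    (fun t ht => (hϑ t ht).hasDerivWithinAt) (fun t ht => (hθ t ht).hasDerivWithinAt)⟩
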